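/- A triangle state ψ = ψ_{A_R B_L} ⊗ ψ_{B_R C_L} ⊗ ψ_{C_R A_L} satisfies g(A:B) = 0, i.e., there exists a purification of ρ_AB = Tr_C |ψ⟩⟨ψ| to an auxiliary system C_L ⊗ C_R such that 2 S(AC_L) = I(A:B); specifically, taking C_L = C_L (containing ψ_{B_R C_L}'s C-part) and C_R as the rest gives S(AC_L) = S(A_R) + S(B_R) = (1/2) I(A:B). -/

import Mathlib

open scoped Classical ComplexOrder

/-- von Neumann entropy of a (Hermitian) matrix, via its spectrum. -/
noncomputable def vnEntropy {n : Type*} [Fintype n] [DecidableEq n]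
    (ρ : Matrix n n ℂ) : ℝ :=
  if h : ρ.IsHermitian then -∑ i, h.eigenvalues i * Real.log (h.eigenvalues i) else 0

/-- Reduced density matrix of a bipartite pure state `ψ : α × β → ℂ` on `α`. -/
noncomputable def redDM {α β : Type*} [Fintype β] (ψ : α × β → ℂ) : Matrix α α ℂ :=
  Matrix.of fun a a' => ∑ b, ψ (a, b) * (starRingEnd ℂ) (ψ (a', b))

/-- Entanglement entropy of the subsystem `α` for the bipartite pure state `ψ`. -/
noncomputable def SE {α β : Type*} [Fintype α] [DecidableEq α] [Fintype β]
    (ψ : α × β → ℂ) : ℝ := vnEntropy (redDM ψ)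

section
variable {aL aR bL bR cL cR : ℕ}

/-- The triangle state `ψ = ψ₁_{A_R B_L} ⊗ ψ₂_{B_R C_L} ⊗ ψ₃_{C_R A_L}` on
`H_A ⊗ H_B ⊗ H_C` with `H_α = H_{α_L} ⊗ H_{α_R}`. -/
noncomputable def triangle (ψ₁ : Fin aR × Fin bL → ℂ) (ψ₂ : Fin bR × Fin cL → ℂ)
    (ψ₃ : Fin cR × Fin aL → ℂ) :
    (Fin aL × Fin aR) × (Fin bL × Fin bR) × (Fin cL × Fin cR) → ℂ :=
  fun p => ψ₁ (p.1.2, p.2.1.1) * ψ₂ (p.2.1.2, p.2.2.1) * ψ₃ (p.2.2.2, p.1.1)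

variable (ψ : (Fin aL × Fin aR) × (Fin bL × Fin bR) × (Fin cL × Fin cR) → ℂ)

/-- `S(A)`. -/
noncomputable def S_A : ℝ := SE ψ
/-- `S(A_L)`. -/
noncomputable def S_AL : ℝ :=
  SE (fun p : Fin aL × (Fin aR × (Fin bL × Fin bR) × (Fin cL × Fin cR)) =>
    ψ ((p.1, p.2.1), p.2.2))
/-- `S(A_R)`. -/
noncomputable def S_AR : ℝ :=
  SE (fun p : Fin aR × (Fin aL × (Fin bL × Fin bR) × (Fin cL × Fin cR)) =>
    ψ ((p.2.1, p.1), p.2.2))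
/-- `S(B)`. -/
noncomputable def S_B : ℝ :=
  SE (fun p : (Fin bL × Fin bR) × ((Fin aL × Fin aR) × (Fin cL × Fin cR)) =>
    ψ (p.2.1, p.1, p.2.2))
/-- `S(C)`. -/
noncomputable def S_C : ℝ :=
  SE (fun p : (Fin cL × Fin cR) × ((Fin aL × Fin aR) × (Fin bL × Fin bR)) =>
    ψ (p.2.1, p.2.2, p.1))
/-- `S(AB)`. -/
noncomputable def S_AB : ℝ :=
  SE (fun p : ((Fin aL × Fin aR) × (Fin bL × Fin bR)) × (Fin cL × Fin cR) =>
    ψ (p.1.1, p.1.2, p.2))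
/-- `S(AC)`. -/
noncomputable def S_AC : ℝ :=
  SE (fun p : ((Fin aL × Fin aR) × (Fin cL × Fin cR)) × (Fin bL × Fin bR) =>
    ψ (p.1.1, p.2, p.1.2))

end

/-!
Take the purification to be the triangle state itself, with the two halves of `C` exchanged: the
half of `C` kept with `A` is then `C_R`, the one entangled with `A_L`. Appending a pure state to
either side of a bipartition does not change its entropy, and entropy is additive over tensor
products. Hence only the states across a cut contribute: `ψ₁` alone is cut in `A C_R : B C_L`, while
each of `A`, `B` and `C` is a vertex of the triangle and cuts its two incident edges. So
`S(A C_R) = S(ψ₁)`, and `S(A) + S(B) - S(AB) = S(A) + S(B) - S(C) = 2 S(ψ₁)`.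
-/

open Matrix Polynomial
open scoped Kronecker

section Spectrum

variable {m n : Type*} [Fintype m] [DecidableEq m] [Fintype n] [DecidableEq n]

theorem charpoly_kronecker_of_isHermitian {𝕜 : Type*} [RCLike 𝕜] {A : Matrix m m 𝕜}
    {B : Matrix n n 𝕜} (hA : A.IsHermitian) (hB : B.IsHermitian) :
    (A ⊗ₖ B).charpoly =
      ∏ p : m × n, (X - C ((hA.eigenvalues p.1 * hB.eigenvalues p.2 : ℝ) : 𝕜)) := by
  set D : Matrix m m 𝕜 := diagonal (RCLike.ofReal ∘ hA.eigenvalues)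
  set E : Matrix n n 𝕜 := diagonal (RCLike.ofReal ∘ hB.eigenvalues)
  set U : Matrix m m 𝕜 := ↑hA.eigenvectorUnitary
  set V : Matrix n n 𝕜 := ↑hB.eigenvectorUnitary
  have hU : star U * U = 1 := Unitary.coe_star_mul_self _
  have hV : star V * V = 1 := Unitary.coe_star_mul_self _
  have hAD : A = U * D * star U := hA.spectral_theorem
  have hBE : B = V * E * star V := hB.spectral_theorem
  calc (A ⊗ₖ B).charpoly
      = ((U ⊗ₖ V) * ((D * star U) ⊗ₖ (E * star V))).charpoly := by
        rw [← mul_kronecker_mul, ← mul_assoc, ← mul_assoc, ← hAD, ← hBE]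
    _ = (D ⊗ₖ E).charpoly := by
        rw [charpoly_mul_comm, ← mul_kronecker_mul, mul_assoc, mul_assoc, hU, hV, mul_one, mul_one]
    _ = _ := by
        rw [diagonal_kronecker_diagonal, charpoly_diagonal]
        simp

theorem sum_eigenvalues_eq_re_trace {ρ : Matrix n n ℂ} (hρ : ρ.IsHermitian) :
    ∑ i, hρ.eigenvalues i = ρ.trace.re := by
  simp [hρ.trace_eq_sum_eigenvalues]

end Spectrum

section VonNeumannEntropy

variable {m n : Type*} [Fintype m] [DecidableEq m] [Fintype n] [DecidableEq n]

theorem vnEntropy_eq_sum_negMulLog {ρ : Matrix n n ℂ} (hρ : ρ.IsHermitian) :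
    vnEntropy ρ = ∑ i, Real.negMulLog (hρ.eigenvalues i) := by
  simp [vnEntropy, hρ, Real.negMulLog_eq_neg]

theorem vnEntropy_eq_sum_roots {ρ : Matrix n n ℂ} (hρ : ρ.IsHermitian) :
    vnEntropy ρ = (ρ.charpoly.roots.map fun z => Real.negMulLog z.re).sum := by
  rw [vnEntropy_eq_sum_negMulLog hρ, hρ.roots_charpoly_eq_eigenvalues, Multiset.map_map]
  simp

theorem vnEntropy_eq_of_charpoly_eq_prod {ι : Type*} [Fintype ι] {ρ : Matrix n n ℂ}
    (hρ : ρ.IsHermitian) {d : ι → ℝ} (hd : ρ.charpoly = ∏ i, (X - C (d i : ℂ))) :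
    vnEntropy ρ = ∑ i, Real.negMulLog (d i) := by
  rw [vnEntropy_eq_sum_roots hρ, hd,
    roots_prod _ _ (Finset.prod_ne_zero_iff.mpr fun i _ => X_sub_C_ne_zero _)]
  simp

theorem vnEntropy_eq_of_X_pow_mul_charpoly_eq {ρ : Matrix m m ℂ} {σ : Matrix n n ℂ}
    (hρ : ρ.IsHermitian) (hσ : σ.IsHermitian) {k l : ℕ}
    (h : X ^ k * ρ.charpoly = X ^ l * σ.charpoly) : vnEntropy ρ = vnEntropy σ := by
  have sum_roots_X_pow_mul (k : ℕ) {p : ℂ[X]} (hp : p ≠ 0) :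
      ((X ^ k * p).roots.map fun z : ℂ => Real.negMulLog z.re).sum =
        (p.roots.map fun z => Real.negMulLog z.re).sum := by
    rw [roots_mul (mul_ne_zero (pow_ne_zero k X_ne_zero) hp)]
    simp [Multiset.map_nsmul, Multiset.sum_nsmul]
  rw [vnEntropy_eq_sum_roots hρ, vnEntropy_eq_sum_roots hσ,
    ← sum_roots_X_pow_mul k ρ.charpoly_monic.ne_zero, h,
    sum_roots_X_pow_mul l σ.charpoly_monic.ne_zero]

theorem vnEntropy_transpose {ρ : Matrix n n ℂ} (hρ : ρ.IsHermitian) :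
    vnEntropy ρᵀ = vnEntropy ρ :=
  vnEntropy_eq_of_X_pow_mul_charpoly_eq hρ.transpose hρ (k := 0) (l := 0)
    (by rw [charpoly_transpose])

theorem vnEntropy_mul_comm {A : Matrix m n ℂ} {B : Matrix n m ℂ}
    (hAB : (A * B).IsHermitian) (hBA : (B * A).IsHermitian) :
    vnEntropy (A * B) = vnEntropy (B * A) :=
  vnEntropy_eq_of_X_pow_mul_charpoly_eq hAB hBA (charpoly_mul_comm' A B)

theorem vnEntropy_kronecker {A : Matrix m m ℂ} {B : Matrix n n ℂ}
    (hA : A.IsHermitian) (hB : B.IsHermitian) :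
    vnEntropy (A ⊗ₖ B) = B.trace.re * vnEntropy A + A.trace.re * vnEntropy B := by
  have hAB : (A ⊗ₖ B).IsHermitian := by
    rw [IsHermitian, conjTranspose_kronecker, hA.eq, hB.eq]
  have hcharpoly : (A ⊗ₖ B).charpoly =
      ∏ p : m × n, (X - C ((hA.eigenvalues p.1 * hB.eigenvalues p.2 : ℝ) : ℂ)) :=
    charpoly_kronecker_of_isHermitian hA hB
  rw [vnEntropy_eq_of_charpoly_eq_prod hAB hcharpoly,
    vnEntropy_eq_sum_negMulLog hA, vnEntropy_eq_sum_negMulLog hB,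
    ← sum_eigenvalues_eq_re_trace hA, ← sum_eigenvalues_eq_re_trace hB]
  simp only [Real.negMulLog_mul, Finset.sum_add_distrib, Fintype.sum_prod_type,
    Finset.sum_mul_sum]
  rw [Finset.sum_comm]

end VonNeumannEntropy

section ReducedDensityMatrix

variable {α β α' β' : Type*}

theorem redDM_comp_swap [Fintype α] (ψ : α × β → ℂ) :
    redDM (ψ ∘ Prod.swap) = ((of (Function.curry ψ))ᴴ * of (Function.curry ψ))ᵀ := by
  ext b b'
  simp [redDM, mul_apply, mul_comm]

variable [Fintype β]

theorem redDM_eq_mul_conjTranspose (ψ : α × β → ℂ) :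
    redDM ψ = of (Function.curry ψ) * (of (Function.curry ψ))ᴴ := by
  ext a a'
  simp [redDM, mul_apply]

theorem isHermitian_redDM (ψ : α × β → ℂ) : (redDM ψ).IsHermitian := by
  rw [redDM_eq_mul_conjTranspose]
  exact isHermitian_mul_conjTranspose_self _

theorem trace_redDM [Fintype α] (ψ : α × β → ℂ) :
    (redDM ψ).trace = (∑ x, Complex.normSq (ψ x) : ℝ) := by
  simp [trace, redDM, Fintype.sum_prod_type, Complex.mul_conj]

/-- The tensor product of two bipartite states, as a bipartite state: the first halves of the
factors are grouped together, and so are the second halves. -/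
def tensorState (ψ : α × β → ℂ) (χ : α' × β' → ℂ) : (α × α') × (β × β') → ℂ :=
  fun p => ψ (p.1.1, p.2.1) * χ (p.1.2, p.2.2)

theorem redDM_tensorState [Fintype β'] (ψ : α × β → ℂ) (χ : α' × β' → ℂ) :
    redDM (tensorState ψ χ) = redDM ψ ⊗ₖ redDM χ := by
  ext a a'
  simp only [redDM, tensorState, of_apply, kroneckerMap_apply, Fintype.sum_prod_type,
    Finset.sum_mul_sum, map_mul]
  exact Finset.sum_congr rfl fun _ _ => Finset.sum_congr rfl fun _ _ => mul_mul_mul_comm ..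

theorem redDM_mul_pure_right {γ δ : Type*} [Fintype γ] [Fintype δ] (ψ : α × β → ℂ) {χ : γ → ℂ}
    (hχ : ∑ c, Complex.normSq (χ c) = 1) (f : δ ≃ β × γ) :
    redDM (fun p : α × δ => ψ (p.1, (f p.2).1) * χ (f p.2).2) = redDM ψ := by
  have hχ' : ∑ c, χ c * starRingEnd ℂ (χ c) = 1 := by
    simp only [Complex.mul_conj, ← Complex.ofReal_sum, hχ, Complex.ofReal_one]
  ext a a'
  simp only [redDM, of_apply, map_mul]
  rw [f.sum_comp fun q => ψ (a, q.1) * χ q.2 *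
      (starRingEnd ℂ (ψ (a', q.1)) * starRingEnd ℂ (χ q.2))]
  simp only [mul_mul_mul_comm _ (χ _), Fintype.sum_prod_type, ← Finset.mul_sum, hχ', mul_one]

end ReducedDensityMatrix

section EntanglementEntropy

variable {α β α' β' γ δ : Type*} [Fintype α] [DecidableEq α] [Fintype β]
  [Fintype α'] [DecidableEq α'] [Fintype β'] [Fintype γ] [Fintype δ]

theorem SE_comp_swap [DecidableEq β] (ψ : α × β → ℂ) : SE (ψ ∘ Prod.swap) = SE ψ := by
  rw [SE, SE, redDM_comp_swap, redDM_eq_mul_conjTranspose,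
    vnEntropy_transpose (isHermitian_conjTranspose_mul_self _),
    vnEntropy_mul_comm (isHermitian_conjTranspose_mul_self _)
      (isHermitian_mul_conjTranspose_self _)]

theorem SE_tensorState (ψ : α × β → ℂ) (χ : α' × β' → ℂ) :
    SE (tensorState ψ χ) =
      (∑ x, Complex.normSq (χ x)) * SE ψ + (∑ x, Complex.normSq (ψ x)) * SE χ := by
  simp only [SE, redDM_tensorState, trace_redDM, Complex.ofReal_re,
    vnEntropy_kronecker (isHermitian_redDM ψ) (isHermitian_redDM χ)]

theorem SE_mul_pure_right (ψ : α × β → ℂ) {χ : γ → ℂ} (hχ : ∑ c, Complex.normSq (χ c) = 1)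
    (f : δ ≃ β × γ) : SE (fun p : α × δ => ψ (p.1, (f p.2).1) * χ (f p.2).2) = SE ψ := by
  rw [SE, SE, redDM_mul_pure_right ψ hχ f]

theorem SE_mul_pure_left [DecidableEq δ] (ψ : α × β → ℂ) {χ : γ → ℂ}
    (hχ : ∑ c, Complex.normSq (χ c) = 1) (e : δ ≃ α × γ) :
    SE (fun p : δ × β => ψ ((e p.1).1, p.2) * χ (e p.1).2) = SE ψ := by
  rw [← SE_comp_swap, ← SE_comp_swap ψ]
  exact SE_mul_pure_right (ψ ∘ Prod.swap) hχ e

/-- A vertex of a triangle of states holds the second half of one edge and the first half of the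
next; the third edge belongs to its complement. -/
theorem SE_vertex {ψ : β × α → ℂ} {χ : α' × β' → ℂ} {ω : γ → ℂ} [DecidableEq β]
    (hψ : ∑ x, Complex.normSq (ψ x) = 1) (hχ : ∑ x, Complex.normSq (χ x) = 1)
    (hω : ∑ c, Complex.normSq (ω c) = 1) (f : δ ≃ (β × β') × γ) :
    SE (fun p : (α × α') × δ =>
        ψ ((f p.2).1.1, p.1.1) * χ (p.1.2, (f p.2).1.2) * ω (f p.2).2) = SE ψ + SE χ := by
  have hψ' : ∑ x, Complex.normSq ((ψ ∘ Prod.swap) x) = 1 :=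
    ((Equiv.prodComm α β).sum_comp fun x => Complex.normSq (ψ x)).trans hψ
  calc _ = SE (tensorState (ψ ∘ Prod.swap) χ) := SE_mul_pure_right _ hω f
    _ = SE ψ + SE χ := by rw [SE_tensorState, hχ, hψ', one_mul, one_mul, SE_comp_swap]

end EntanglementEntropy

section Triangle

variable {aL aR bL bR cL cR : ℕ}

theorem S_AB_eq_S_C (ψ : (Fin aL × Fin aR) × (Fin bL × Fin bR) × (Fin cL × Fin cR) → ℂ) :
    S_AB ψ = S_C ψ := by
  rw [S_AB, S_C, ← SE_comp_swap]
  rfl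

variable {ψ₁ : Fin aR × Fin bL → ℂ} {ψ₂ : Fin bR × Fin cL → ℂ} {ψ₃ : Fin cR × Fin aL → ℂ}

theorem S_A_triangle (h₁ : ∑ x, Complex.normSq (ψ₁ x) = 1) (h₂ : ∑ x, Complex.normSq (ψ₂ x) = 1)
    (h₃ : ∑ x, Complex.normSq (ψ₃ x) = 1) : S_A (triangle ψ₁ ψ₂ ψ₃) = SE ψ₃ + SE ψ₁ := by
  let f : (Fin bL × Fin bR) × (Fin cL × Fin cR) ≃ (Fin cR × Fin bL) × (Fin bR × Fin cL) :=
    ⟨fun x => ((x.2.2, x.1.1), (x.1.2, x.2.1)), fun y => ((y.1.2, y.2.1), (y.2.2, y.1.1)),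
      fun _ => rfl, fun _ => rfl⟩
  rw [S_A, ← SE_vertex h₃ h₁ h₂ f]
  congr! 2 with p
  exact (mul_rotate (ψ₃ _) _ _).symm

theorem S_B_triangle (h₁ : ∑ x, Complex.normSq (ψ₁ x) = 1) (h₂ : ∑ x, Complex.normSq (ψ₂ x) = 1)
    (h₃ : ∑ x, Complex.normSq (ψ₃ x) = 1) : S_B (triangle ψ₁ ψ₂ ψ₃) = SE ψ₁ + SE ψ₂ := by
  let f : (Fin aL × Fin aR) × (Fin cL × Fin cR) ≃ (Fin aR × Fin cL) × (Fin cR × Fin aL) :=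
    ⟨fun x => ((x.1.2, x.2.1), (x.2.2, x.1.1)), fun y => ((y.2.2, y.1.1), (y.1.2, y.2.1)),
      fun _ => rfl, fun _ => rfl⟩
  exact SE_vertex h₁ h₂ h₃ f

theorem S_C_triangle (h₁ : ∑ x, Complex.normSq (ψ₁ x) = 1) (h₂ : ∑ x, Complex.normSq (ψ₂ x) = 1)
    (h₃ : ∑ x, Complex.normSq (ψ₃ x) = 1) : S_C (triangle ψ₁ ψ₂ ψ₃) = SE ψ₂ + SE ψ₃ := by
  let f : (Fin aL × Fin aR) × (Fin bL × Fin bR) ≃ (Fin bR × Fin aL) × (Fin aR × Fin bL) :=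
    ⟨fun x => ((x.2.2, x.1.1), (x.1.2, x.2.1)), fun y => ((y.1.2, y.2.1), (y.2.2, y.1.1)),
      fun _ => rfl, fun _ => rfl⟩
  rw [S_C, ← SE_vertex h₂ h₃ h₁ f]
  congr! 2 with p
  exact mul_rotate (ψ₁ _) _ _

theorem SE_triangle_A_CR (h₂ : ∑ x, Complex.normSq (ψ₂ x) = 1)
    (h₃ : ∑ x, Complex.normSq (ψ₃ x) = 1) :
    SE (fun p : ((Fin aL × Fin aR) × Fin cR) × ((Fin bL × Fin bR) × Fin cL) =>
        triangle ψ₁ ψ₂ ψ₃ (p.1.1, p.2.1, (p.2.2, p.1.2))) = SE ψ₁ := by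
  let e : (Fin aL × Fin aR) × Fin cR ≃ Fin aR × (Fin cR × Fin aL) :=
    ⟨fun x => (x.1.2, (x.2, x.1.1)), fun y => ((y.2.2, y.1), y.2.1), fun _ => rfl, fun _ => rfl⟩
  let f : (Fin bL × Fin bR) × Fin cL ≃ Fin bL × (Fin bR × Fin cL) := Equiv.prodAssoc _ _ _
  rw [← SE_mul_pure_right ψ₁ h₂ f]
  exact SE_mul_pure_left (fun p => ψ₁ (p.1, (f p.2).1) * ψ₂ (f p.2).2) h₃ e

end Triangle

/-- A triangle state has `g(A:B) = 0`: there exists a purification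
`φ` of `ρ_AB = Tr_C |ψ⟩⟨ψ|` to an auxiliary system `C_L ⊗ C_R` such that
`2 S(A C_L) = I(A:B)`, i.e. `S(A C_L) = ½ I(A:B)`. -/
theorem triangle_g_eq_zero (aL aR bL bR cL cR : ℕ)
    (ψ₁ : Fin aR × Fin bL → ℂ) (ψ₂ : Fin bR × Fin cL → ℂ) (ψ₃ : Fin cR × Fin aL → ℂ)
    (h₁ : ∑ x : Fin aR × Fin bL, Complex.normSq (ψ₁ x) = 1)
    (h₂ : ∑ x : Fin bR × Fin cL, Complex.normSq (ψ₂ x) = 1)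
    (h₃ : ∑ x : Fin cR × Fin aL, Complex.normSq (ψ₃ x) = 1) :
    ∃ (nL nR : ℕ)
      (φ : (Fin aL × Fin aR) × (Fin bL × Fin bR) × Fin nL × Fin nR → ℂ),
      (∀ p q : (Fin aL × Fin aR) × (Fin bL × Fin bR),
        (∑ l : Fin nL, ∑ r : Fin nR,
            φ (p.1, p.2, l, r) * (starRingEnd ℂ) (φ (q.1, q.2, l, r))) =
        ∑ c : Fin cL × Fin cR,
            triangle ψ₁ ψ₂ ψ₃ (p.1, p.2, c) *
              (starRingEnd ℂ) (triangle ψ₁ ψ₂ ψ₃ (q.1, q.2, c))) ∧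
      2 * SE (fun p : ((Fin aL × Fin aR) × Fin nL) × ((Fin bL × Fin bR) × Fin nR) =>
          φ (p.1.1, p.2.1, p.1.2, p.2.2)) =
        S_A (triangle ψ₁ ψ₂ ψ₃) + S_B (triangle ψ₁ ψ₂ ψ₃)
          - S_AB (triangle ψ₁ ψ₂ ψ₃) := by
  refine ⟨cR, cL, fun p => triangle ψ₁ ψ₂ ψ₃ (p.1, p.2.1, (p.2.2.2, p.2.2.1)), fun p q => ?_, ?_⟩
  · rw [Fintype.sum_prod_type, Finset.sum_comm]
  · rw [SE_triangle_A_CR h₂ h₃, S_AB_eq_S_C, S_A_triangle h₁ h₂ h₃, S_B_triangle h₁ h₂ h₃,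
      S_C_triangle h₁ h₂ h₃]
    ring
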